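/- Let p ∈ (0,1), λ = min(p, 1−p), let q ≥ 2 be real, and set γ = λ^{1/2 − 1/q} / √(q−1). Then for every f : {−1,1}^n → ℝ, under the p-biased measure μ one has ‖T_γ f‖_q ≤ ‖f‖₂. -/

import Mathlib

open Filter Function Real

noncomputable def pwt (p : ℝ) {n : ℕ} (x : Fin n → Bool) : ℝ :=
  ∏ i, if x i then p else 1 - p

noncomputable def pE (p : ℝ) {n : ℕ} (f : (Fin n → Bool) → ℝ) : ℝ :=
  ∑ x, pwt p x * f x

noncomputable def pNorm (p q : ℝ) {n : ℕ} (f : (Fin n → Bool) → ℝ) : ℝ :=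
  (pE p fun x => |f x| ^ q) ^ (1 / q)

noncomputable def pVar (p : ℝ) {n : ℕ} (f : (Fin n → Bool) → ℝ) : ℝ :=
  pE p (fun x => f x ^ 2) - (pE p f) ^ 2

noncomputable def condE (p : ℝ) {n : ℕ} (i : Fin n) (f : (Fin n → Bool) → ℝ) :
    (Fin n → Bool) → ℝ :=
  fun x => (1 - p) * f (Function.update x i false) + p * f (Function.update x i true)

noncomputable def chi (p : ℝ) {n : ℕ} (S : Finset (Fin n)) (x : Fin n → Bool) : ℝ :=
  ∏ i ∈ S, ((if x i then (1:ℝ) else -1) - (2 * p - 1)) / (2 * Real.sqrt (p * (1 - p)))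

noncomputable def fhat (p : ℝ) {n : ℕ} (f : (Fin n → Bool) → ℝ) (S : Finset (Fin n)) : ℝ :=
  pE p fun x => f x * chi p S x

noncomputable def noiseOp (p δ : ℝ) {n : ℕ} (f : (Fin n → Bool) → ℝ) :
    (Fin n → Bool) → ℝ :=
  fun x => ∑ S : Finset (Fin n), δ ^ S.card * fhat p f S * chi p S x

/-!
Induction on the number of bits. Split off the first bit as `f (c, y) = m y + χ c * b y`, so that
the noise operator acts by `T f (c, y) = T m y + δ * χ c * T b y`. The one-bit inequality bounds the
`L^q` norm in `c` by `√((T m)² + (T b)²)`, Minkowski's inequality in `L^(q/2)` separates the two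
terms, and the induction hypothesis together with `‖f‖₂² = ‖m‖₂² + ‖b‖₂²` concludes.

For one bit, let `z` have mean zero. The function `t ↦ ‖a + t z‖_q²` has vanishing derivative at `0`
and, by Hölder's inequality, second derivative at most `2 (q - 1) ‖z‖_q²`, whence
`‖a + z‖_q² ≤ a² + (q - 1) ‖z‖_q²`. If all atoms have mass at least `λ`, then moreover
`‖z‖_q ≤ λ^(1/q - 1/2) ‖z‖₂`, and replacing `z` by `δ z` exactly absorbs both constants.
-/

section Calculus

lemma hasDerivAt_abs_rpow_mul_self {r : ℝ} (hr : 0 ≤ r) (x : ℝ) :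
    HasDerivAt (fun y : ℝ => |y| ^ r * y) ((r + 1) * |x| ^ r) x := by
  rcases hr.eq_or_lt with rfl | hr
  · simpa using hasDerivAt_id' x
  rcases eq_or_ne x 0 with rfl | hx
  · have h_lim : Tendsto (fun y : ℝ => |y| ^ r) (nhds 0) (nhds 0) := by
      simpa [hr.ne'] using (continuous_abs.rpow_const fun _ => Or.inr hr.le).tendsto (0 : ℝ)
    rw [hasDerivAt_iff_tendsto_slope, abs_zero, zero_rpow hr.ne', mul_zero]
    refine (h_lim.mono_left nhdsWithin_le_nhds).congr' ?_
    filter_upwards [self_mem_nhdsWithin] with y (hy : y ≠ 0)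
    rw [slope_def_field, mul_zero, sub_zero, sub_zero, mul_div_cancel_right₀ _ hy]
  · have h_abs : |x| ≠ 0 := abs_ne_zero.2 hx
    have h_deriv := ((hasDerivAt_abs hx).rpow_const (p := r) (Or.inl h_abs)).mul (hasDerivAt_id' x)
    refine h_deriv.congr_deriv ?_
    rw [rpow_sub_one h_abs]
    have h_sign : (SignType.sign x : ℝ) * x = |x| := sign_mul_self x
    field_simp
    linear_combination r * h_sign

lemma hasDerivAt_add_smul_apply {ι : Type*} (f g : ι → ℝ) (i : ι) (t : ℝ) :
    HasDerivAt (fun s : ℝ => (f + s • g) i) (g i) t := by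
  simpa using ((hasDerivAt_id' t).mul_const (g i)).const_add (f i)

lemma le_quadratic_of_deriv2_le {φ φ' φ'' : ℝ → ℝ} {a b K : ℝ} (hab : a ≤ b)
    (hφ : ∀ t ∈ Set.Icc a b, HasDerivAt φ (φ' t) t)
    (hφ' : ∀ t ∈ Set.Icc a b, HasDerivAt φ' (φ'' t) t) (hK : ∀ t ∈ Set.Icc a b, φ'' t ≤ K) :
    φ b ≤ φ a + φ' a * (b - a) + K / 2 * (b - a) ^ 2 := by
  have h_sub (t : ℝ) : HasDerivAt (fun s => s - a) 1 t := (hasDerivAt_id' t).sub_const a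
  have h_affine (t : ℝ) : HasDerivAt (fun s => φ' a + K * (s - a)) K t := by
    simpa using ((h_sub t).const_mul K).const_add (φ' a)
  have h_quadratic (t : ℝ) :
      HasDerivAt (fun s => φ a + φ' a * (s - a) + K / 2 * (s - a) ^ 2) (φ' a + K * (t - a)) t :=
    ((((h_sub t).const_mul (φ' a)).const_add (φ a)).add
      (((h_sub t).pow 2).const_mul (K / 2))).congr_deriv (by push_cast; ring)
  have hφ'_le : ∀ ⦃t⦄, t ∈ Set.Icc a b → φ' t ≤ φ' a + K * (t - a) :=
    image_le_of_deriv_right_le_deriv_boundary (HasDerivAt.continuousOn hφ')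
      (fun t ht => (hφ' t (Set.Ico_subset_Icc_self ht)).hasDerivWithinAt) (by simp)
      (HasDerivAt.continuousOn fun t _ => h_affine t)
      (fun t _ => (h_affine t).hasDerivWithinAt) fun t ht => hK t (Set.Ico_subset_Icc_self ht)
  exact image_le_of_deriv_right_le_deriv_boundary (HasDerivAt.continuousOn hφ)
    (fun t ht => (hφ t (Set.Ico_subset_Icc_self ht)).hasDerivWithinAt) (by simp)
    (HasDerivAt.continuousOn fun t _ => h_quadratic t)
    (fun t _ => (h_quadratic t).hasDerivWithinAt)
    (fun t ht => hφ'_le (Set.Ico_subset_Icc_self ht)) (Set.right_mem_Icc.2 hab)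

end Calculus

section WeightedLpNorm

variable {ι : Type*} [Fintype ι] {w : ι → ℝ} {q : ℝ}

/-- The `L^q` norm of a function on a finite type in which the point `i` has mass `w i`. -/
noncomputable def weightedLpNorm (w : ι → ℝ) (q : ℝ) (f : ι → ℝ) : ℝ :=
  (∑ i, w i * |f i| ^ q) ^ (1 / q)

lemma sum_weight_mul_abs_rpow_nonneg (hw : 0 ≤ w) (q : ℝ) (f : ι → ℝ) :
    0 ≤ ∑ i, w i * |f i| ^ q :=
  Finset.sum_nonneg fun i _ => mul_nonneg (hw i) (rpow_nonneg (abs_nonneg _) q)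

lemma weightedLpNorm_nonneg (hw : 0 ≤ w) (q : ℝ) (f : ι → ℝ) : 0 ≤ weightedLpNorm w q f :=
  rpow_nonneg (sum_weight_mul_abs_rpow_nonneg hw q f) _

lemma weightedLpNorm_rpow (hw : 0 ≤ w) (q r : ℝ) (f : ι → ℝ) :
    weightedLpNorm w q f ^ r = (∑ i, w i * |f i| ^ q) ^ (r / q) := by
  rw [weightedLpNorm, ← rpow_mul (sum_weight_mul_abs_rpow_nonneg hw q f), one_div_mul_eq_div]

lemma weightedLpNorm_rpow_self (hw : 0 ≤ w) (hq : q ≠ 0) (f : ι → ℝ) :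
    weightedLpNorm w q f ^ q = ∑ i, w i * |f i| ^ q := by
  rw [weightedLpNorm_rpow hw, div_self hq, rpow_one]

lemma weightedLpNorm_sq (hw : 0 ≤ w) (q : ℝ) (f : ι → ℝ) :
    weightedLpNorm w q f ^ 2 = (∑ i, w i * |f i| ^ q) ^ (2 / q) := by
  rw [← rpow_two, weightedLpNorm_rpow hw]

lemma weightedLpNorm_two_sq (hw : 0 ≤ w) (f : ι → ℝ) :
    weightedLpNorm w 2 f ^ 2 = ∑ i, w i * f i ^ 2 := by
  simp only [weightedLpNorm_sq hw, div_self (two_ne_zero' ℝ), rpow_one, rpow_two, sq_abs]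

lemma weightedLpNorm_mono (hw : 0 ≤ w) (hq : 0 ≤ q) {f g : ι → ℝ} (hfg : ∀ i, |f i| ≤ |g i|) :
    weightedLpNorm w q f ≤ weightedLpNorm w q g := by
  refine rpow_le_rpow (sum_weight_mul_abs_rpow_nonneg hw q f) ?_ (by positivity)
  exact Finset.sum_le_sum fun i _ =>
    mul_le_mul_of_nonneg_left (rpow_le_rpow (abs_nonneg _) (hfg i) hq) (hw i)

lemma weightedLpNorm_smul (hw : 0 ≤ w) (hq : q ≠ 0) (c : ℝ) (f : ι → ℝ) :
    weightedLpNorm w q (c • f) = |c| * weightedLpNorm w q f := by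
  have h_sum : ∑ i, w i * |(c • f) i| ^ q = |c| ^ q * ∑ i, w i * |f i| ^ q := by
    rw [Finset.mul_sum]
    refine Finset.sum_congr rfl fun i _ => ?_
    rw [Pi.smul_apply, smul_eq_mul, abs_mul, mul_rpow (abs_nonneg c) (abs_nonneg _), mul_left_comm]
  rw [weightedLpNorm, h_sum, mul_rpow (by positivity) (sum_weight_mul_abs_rpow_nonneg hw q f),
    ← rpow_mul (abs_nonneg c), mul_one_div_cancel hq, rpow_one, weightedLpNorm]

lemma abs_sum_weight_mul_le_weightedLpNorm (hw : 0 ≤ w) (hw_sum : ∑ i, w i = 1) (hq : 1 ≤ q)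
    (f : ι → ℝ) : |∑ i, w i * f i| ≤ weightedLpNorm w q f := by
  have h_abs : |∑ i, w i * f i| ≤ ∑ i, w i * |f i| :=
    (Finset.abs_sum_le_sum_abs _ _).trans_eq <|
      Finset.sum_congr rfl fun i _ => by rw [abs_mul, abs_of_nonneg (hw i)]
  have h_jensen : (∑ i, w i * |f i|) ^ q ≤ weightedLpNorm w q f ^ q := by
    rw [weightedLpNorm_rpow_self hw (by positivity)]
    exact rpow_arith_mean_le_arith_mean_rpow _ w _ (fun i _ => hw i) hw_sum
      (fun i _ => abs_nonneg _) hq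
  exact h_abs.trans <|
    (rpow_le_rpow_iff (Finset.sum_nonneg fun i _ => mul_nonneg (hw i) (abs_nonneg _))
      (weightedLpNorm_nonneg hw q f) (by positivity)).1 h_jensen

lemma abs_le_of_weight_ge {m r : ℝ} (hm : 0 < m) (hw : ∀ i, m ≤ w i) (hr : 0 < r)
    (f : ι → ℝ) (i : ι) : |f i| ≤ m ^ (-(1 / r)) * weightedLpNorm w r f := by
  have hw_nonneg : 0 ≤ w := fun j => hm.le.trans (hw j)
  have h_term : m * |f i| ^ r ≤ weightedLpNorm w r f ^ r := by
    rw [weightedLpNorm_rpow_self hw_nonneg hr.ne']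
    calc m * |f i| ^ r ≤ w i * |f i| ^ r := by gcongr; exact hw i
      _ ≤ ∑ j, w j * |f j| ^ r :=
        Finset.single_le_sum (f := fun j => w j * |f j| ^ r)
          (fun j _ => mul_nonneg (hw_nonneg j) (by positivity)) (Finset.mem_univ i)
  have hN := weightedLpNorm_nonneg hw_nonneg r f
  refine (rpow_le_rpow_iff (abs_nonneg _) (by positivity) hr).1 ?_
  rw [mul_rpow (by positivity) hN, ← rpow_mul hm.le, neg_mul, one_div_mul_cancel hr.ne',
    rpow_neg_one]
  exact (le_inv_mul_iff₀ hm).2 h_term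

lemma weightedLpNorm_le_of_weight_ge {m r : ℝ} (hm : 0 < m) (hw : ∀ i, m ≤ w i) (hr : 0 < r)
    (hrq : r ≤ q) (f : ι → ℝ) :
    weightedLpNorm w q f ≤ m ^ (1 / q - 1 / r) * weightedLpNorm w r f := by
  have hw_nonneg : 0 ≤ w := fun i => hm.le.trans (hw i)
  have hq : 0 < q := hr.trans_le hrq
  set N := weightedLpNorm w r f
  have hN : 0 ≤ N := weightedLpNorm_nonneg hw_nonneg r f
  have h_split {x : ℝ} (hx : 0 ≤ x) : x ^ q = x ^ (q - r) * x ^ r := by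
    rw [← rpow_add_of_nonneg hx (sub_nonneg.2 hrq) hr.le, sub_add_cancel]
  have h_rpow : weightedLpNorm w q f ^ q ≤ (m ^ (1 / q - 1 / r) * N) ^ q := calc
    weightedLpNorm w q f ^ q = ∑ i, |f i| ^ (q - r) * (w i * |f i| ^ r) := by
      rw [weightedLpNorm_rpow_self hw_nonneg hq.ne']
      exact Finset.sum_congr rfl fun i _ => by rw [h_split (abs_nonneg _), mul_left_comm]
    _ ≤ ∑ i, (m ^ (-(1 / r)) * N) ^ (q - r) * (w i * |f i| ^ r) := by
      refine Finset.sum_le_sum fun i _ => mul_le_mul_of_nonneg_right ?_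
        (mul_nonneg (hw_nonneg i) (by positivity))
      exact rpow_le_rpow (abs_nonneg _) (abs_le_of_weight_ge hm hw hr f i) (sub_nonneg.2 hrq)
    _ = m ^ (-(1 / r) * (q - r)) * N ^ q := by
      rw [← Finset.mul_sum, ← weightedLpNorm_rpow_self hw_nonneg hr.ne',
        mul_rpow (by positivity) hN, ← rpow_mul hm.le, h_split hN, mul_assoc]
    _ = (m ^ (1 / q - 1 / r) * N) ^ q := by
      rw [mul_rpow (by positivity) hN, ← rpow_mul hm.le]
      congr 2
      field_simp
      ring
  exact (rpow_le_rpow_iff (weightedLpNorm_nonneg hw_nonneg q f) (by positivity) hq).1 h_rpow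

lemma sum_weight_mul_abs_rpow_sub_two_mul_sq_le (hw : 0 ≤ w) (hq : 2 ≤ q) (f g : ι → ℝ) :
    ∑ i, w i * |f i| ^ (q - 2) * g i ^ 2 ≤
      weightedLpNorm w q f ^ (q - 2) * weightedLpNorm w q g ^ 2 := by
  rcases hq.eq_or_lt with rfl | hq
  · simp [weightedLpNorm_two_sq hw]
  have h_conj : (q / (q - 2)).HolderConjugate (q / 2) := by
    refine Real.holderConjugate_iff.2 ⟨?_, ?_⟩
    · rw [lt_div_iff₀ (by linarith)]
      linarith
    · field_simp
      ring
  have h_left (i : ι) :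
      (w i ^ ((q - 2) / q) * |f i| ^ (q - 2)) ^ (q / (q - 2)) = w i * |f i| ^ q := by
    have : q - 2 ≠ 0 := by linarith
    rw [mul_rpow (rpow_nonneg (hw i) _) (by positivity), ← rpow_mul (hw i),
      ← rpow_mul (abs_nonneg _), div_mul_div_cancel₀ (by linarith), div_self this,
      mul_div_cancel₀ _ this, rpow_one]
  have h_right (i : ι) : (w i ^ (2 / q) * g i ^ 2) ^ (q / 2) = w i * |g i| ^ q := by
    rw [mul_rpow (rpow_nonneg (hw i) _) (by positivity), ← rpow_mul (hw i), ← sq_abs, ← rpow_two,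
      ← rpow_mul (abs_nonneg _), div_mul_div_cancel₀ (by linarith), div_self two_ne_zero,
      mul_div_cancel₀ _ two_ne_zero, rpow_one]
  have h_weight (i : ι) : w i ^ ((q - 2) / q) * w i ^ (2 / q) = w i := by
    rw [← rpow_add_of_nonneg (hw i) (div_nonneg (by linarith) (by linarith)) (by positivity),
      ← add_div, sub_add_cancel, div_self (by linarith), rpow_one]
  have h_holder := Real.inner_le_Lp_mul_Lq_of_nonneg Finset.univ h_conj
    (f := fun i => w i ^ ((q - 2) / q) * |f i| ^ (q - 2)) (g := fun i => w i ^ (2 / q) * g i ^ 2)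
    (fun i _ => mul_nonneg (rpow_nonneg (hw i) _) (by positivity))
    (fun i _ => mul_nonneg (rpow_nonneg (hw i) _) (by positivity))
  simp only [h_left, h_right, one_div_div] at h_holder
  rw [weightedLpNorm_rpow hw, weightedLpNorm_sq hw]
  refine (Finset.sum_congr rfl fun i _ => ?_).trans_le h_holder
  linear_combination -(|f i| ^ (q - 2) * g i ^ 2) * h_weight i

lemma sum_weight_mul_add_rpow_le {r : ℝ} (hw : 0 ≤ w) (hr : 1 ≤ r) {f g : ι → ℝ} (hf : 0 ≤ f)
    (hg : 0 ≤ g) :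
    (∑ i, w i * (f i + g i) ^ r) ^ (1 / r) ≤
      (∑ i, w i * f i ^ r) ^ (1 / r) + (∑ i, w i * g i ^ r) ^ (1 / r) := by
  have h_weight (i : ι) {x : ℝ} (hx : 0 ≤ x) : (w i ^ (1 / r) * x) ^ r = w i * x ^ r := by
    rw [mul_rpow (rpow_nonneg (hw i) _) hx, ← rpow_mul (hw i), one_div_mul_cancel (by positivity),
      rpow_one]
  have h_minkowski := Real.Lp_add_le_of_nonneg Finset.univ hr
    (f := fun i => w i ^ (1 / r) * f i) (g := fun i => w i ^ (1 / r) * g i)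
    (fun i _ => mul_nonneg (rpow_nonneg (hw i) _) (hf i))
    (fun i _ => mul_nonneg (rpow_nonneg (hw i) _) (hg i))
  simpa only [← mul_add, h_weight _ (hf _), h_weight _ (hg _),
    h_weight _ (add_nonneg (hf _) (hg _))] using h_minkowski

lemma weightedLpNorm_sqrt_sq_add_sq_le (hw : 0 ≤ w) (hq : 2 ≤ q) (f g : ι → ℝ) :
    weightedLpNorm w q (fun i => √(f i ^ 2 + g i ^ 2)) ^ 2 ≤
      weightedLpNorm w q f ^ 2 + weightedLpNorm w q g ^ 2 := by
  have h_abs_rpow (x : ℝ) : |x| ^ q = (x ^ 2) ^ (q / 2) := by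
    rw [← sq_abs, ← rpow_two, ← rpow_mul (abs_nonneg x), mul_div_cancel₀ _ two_ne_zero]
  have h_sqrt (i : ι) : √(f i ^ 2 + g i ^ 2) ^ 2 = f i ^ 2 + g i ^ 2 := sq_sqrt (by positivity)
  simp only [weightedLpNorm_sq hw, h_abs_rpow, h_sqrt, ← one_div_div q 2]
  exact sum_weight_mul_add_rpow_le hw (by linarith) (fun i => sq_nonneg (f i))
    fun i => sq_nonneg (g i)

end WeightedLpNorm

section UniformSmoothness

variable {ι : Type*} [Fintype ι] {w : ι → ℝ} {q : ℝ}

/-- The pairing `E[|f|^(q-2) f g]` of `g` with the duality map of `L^q` at `f`; up to a power of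
`‖f‖_q` it is the derivative of the norm at `f` in the direction `g`. -/
noncomputable def dualityPairing (w : ι → ℝ) (q : ℝ) (f g : ι → ℝ) : ℝ :=
  ∑ i, w i * (|f i| ^ (q - 2) * f i) * g i

lemma hasDerivAt_weightedLpNorm_add_smul (hw : 0 ≤ w) (hq : 1 < q) {f g : ι → ℝ} {t : ℝ}
    (hpos : 0 < weightedLpNorm w q (f + t • g)) :
    HasDerivAt (fun s : ℝ => weightedLpNorm w q (f + s • g))
      (weightedLpNorm w q (f + t • g) ^ (1 - q) * dualityPairing w q (f + t • g) g) t := by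
  have hq0 : q ≠ 0 := by positivity
  have h_sum : HasDerivAt (fun s : ℝ => ∑ i, w i * |(f + s • g) i| ^ q)
      (q * dualityPairing w q (f + t • g) g) t := by
    rw [dualityPairing, Finset.mul_sum]
    refine HasDerivAt.fun_sum fun i _ => ?_
    have h_abs :=
      (hasDerivAt_abs_rpow ((f + t • g) i) hq).comp t (hasDerivAt_add_smul_apply f g i t)
    exact (h_abs.const_mul (w i)).congr_deriv (by ring)
  have h_sum_ne : ∑ i, w i * |(f + t • g) i| ^ q ≠ 0 := by
    rw [← weightedLpNorm_rpow_self hw hq0]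
    positivity
  refine (h_sum.rpow_const (p := 1 / q) (Or.inl h_sum_ne)).congr_deriv ?_
  rw [weightedLpNorm_rpow hw, show 1 / q - 1 = (1 - q) / q by field_simp]
  field_simp

lemma hasDerivAt_weightedLpNorm_add_smul_sq (hw : 0 ≤ w) (hq : 1 < q) {f g : ι → ℝ} {t : ℝ}
    (hpos : 0 < weightedLpNorm w q (f + t • g)) :
    HasDerivAt (fun s : ℝ => weightedLpNorm w q (f + s • g) ^ 2)
      (2 * (weightedLpNorm w q (f + t • g) ^ (2 - q) * dualityPairing w q (f + t • g) g)) t := by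
  refine ((hasDerivAt_weightedLpNorm_add_smul hw hq hpos).pow 2).congr_deriv ?_
  rw [show 2 - q = (1 - q) + 1 by ring, rpow_add_one hpos.ne']
  push_cast
  ring

lemma hasDerivAt_dualityPairing_add_smul (hq : 2 ≤ q) (f g : ι → ℝ) (t : ℝ) :
    HasDerivAt (fun s : ℝ => dualityPairing w q (f + s • g) g)
      ((q - 1) * ∑ i, w i * |(f + t • g) i| ^ (q - 2) * g i ^ 2) t := by
  rw [Finset.mul_sum]
  refine HasDerivAt.fun_sum fun i _ => ?_
  have h_comp := (hasDerivAt_abs_rpow_mul_self (sub_nonneg.2 hq) ((f + t • g) i)).comp t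
    (hasDerivAt_add_smul_apply f g i t)
  exact ((h_comp.const_mul (w i)).mul_const (g i)).congr_deriv (by ring)

lemma weightedLpNorm_add_sq_le (hw : 0 ≤ w) (hq : 2 ≤ q) {f g : ι → ℝ}
    (hpos : ∀ t ∈ Set.Icc (0 : ℝ) 1, 0 < weightedLpNorm w q (f + t • g)) :
    weightedLpNorm w q (f + g) ^ 2 ≤ weightedLpNorm w q f ^ 2 +
      2 * weightedLpNorm w q f ^ (2 - q) * dualityPairing w q f g +
      (q - 1) * weightedLpNorm w q g ^ 2 := by
  set N : ℝ → ℝ := fun t => weightedLpNorm w q (f + t • g)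
  set D : ℝ → ℝ := fun t => dualityPairing w q (f + t • g) g
  set S : ℝ → ℝ := fun t => ∑ i, w i * |(f + t • g) i| ^ (q - 2) * g i ^ 2
  have hN (t : ℝ) (ht : t ∈ Set.Icc (0 : ℝ) 1) : HasDerivAt N (N t ^ (1 - q) * D t) t :=
    hasDerivAt_weightedLpNorm_add_smul hw (by linarith) (hpos t ht)
  have hN_sq (t : ℝ) (ht : t ∈ Set.Icc (0 : ℝ) 1) :
      HasDerivAt (fun s => N s ^ 2) (2 * (N t ^ (2 - q) * D t)) t :=
    hasDerivAt_weightedLpNorm_add_smul_sq hw (by linarith) (hpos t ht)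
  have hN_sq' (t : ℝ) (ht : t ∈ Set.Icc (0 : ℝ) 1) :
      HasDerivAt (fun s => 2 * (N s ^ (2 - q) * D s))
        (2 * ((2 - q) * (N t ^ (1 - q) * D t) ^ 2 + (q - 1) * (N t ^ (2 - q) * S t))) t := by
    have h_rpow := (hN t ht).rpow_const (p := 2 - q) (Or.inl (hpos t ht).ne')
    refine ((h_rpow.mul (hasDerivAt_dualityPairing_add_smul hq f g t)).const_mul 2).congr_deriv ?_
    rw [show 2 - q - 1 = 1 - q by ring]
    ring
  have h_bound (t : ℝ) (ht : t ∈ Set.Icc (0 : ℝ) 1) :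
      2 * ((2 - q) * (N t ^ (1 - q) * D t) ^ 2 + (q - 1) * (N t ^ (2 - q) * S t)) ≤
        2 * ((q - 1) * weightedLpNorm w q g ^ 2) := by
    have h_drop : (2 - q) * (N t ^ (1 - q) * D t) ^ 2 ≤ 0 :=
      mul_nonpos_of_nonpos_of_nonneg (by linarith) (sq_nonneg _)
    have h_holder : N t ^ (2 - q) * S t ≤ weightedLpNorm w q g ^ 2 := calc
      _ ≤ N t ^ (2 - q) * (N t ^ (q - 2) * weightedLpNorm w q g ^ 2) :=
        mul_le_mul_of_nonneg_left (sum_weight_mul_abs_rpow_sub_two_mul_sq_le hw hq _ g)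
          (rpow_nonneg (hpos t ht).le _)
      _ = weightedLpNorm w q g ^ 2 := by
        rw [← mul_assoc, ← rpow_add (hpos t ht), sub_add_sub_cancel, sub_self, rpow_zero, one_mul]
    nlinarith
  have h_taylor := le_quadratic_of_deriv2_le zero_le_one hN_sq hN_sq' h_bound
  simp only [N, D, zero_smul, one_smul, add_zero] at h_taylor
  linarith

theorem weightedLpNorm_const_add_sq_le (hw : 0 ≤ w) (hw_sum : ∑ i, w i = 1) (hq : 2 ≤ q) (a : ℝ)
    {z : ι → ℝ} (hz : ∑ i, w i * z i = 0) :
    weightedLpNorm w q (const ι a + z) ^ 2 ≤ a ^ 2 + (q - 1) * weightedLpNorm w q z ^ 2 := by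
  rcases eq_or_ne a 0 with rfl | ha
  · have h_zero : const ι (0 : ℝ) + z = z := funext fun i => zero_add (z i)
    rw [h_zero]
    nlinarith [sq_nonneg (weightedLpNorm w q z)]
  have h_mean (t : ℝ) : ∑ i, w i * (const ι a + t • z) i = a := by
    simp only [Pi.add_apply, const_apply, Pi.smul_apply, smul_eq_mul, mul_add,
      Finset.sum_add_distrib, mul_left_comm, ← Finset.sum_mul, ← Finset.mul_sum, hz, hw_sum]
    ring
  have hpos (t : ℝ) : 0 < weightedLpNorm w q (const ι a + t • z) := by
    have h_jensen := abs_sum_weight_mul_le_weightedLpNorm hw hw_sum (by linarith : 1 ≤ q)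
      (const ι a + t • z)
    rw [h_mean] at h_jensen
    exact (abs_pos.2 ha).trans_le h_jensen
  have h_norm : weightedLpNorm w q (const ι a) ^ 2 = a ^ 2 := by
    simp only [weightedLpNorm_sq hw, const_apply, ← Finset.sum_mul, hw_sum, one_mul]
    rw [← rpow_mul (abs_nonneg a), mul_div_cancel₀ _ (by linarith), rpow_two, sq_abs]
  have h_pairing : dualityPairing w q (const ι a) z = 0 := by
    simp only [dualityPairing, const_apply, mul_right_comm (w _), ← Finset.sum_mul, hz, zero_mul]
  have h_expand := weightedLpNorm_add_sq_le hw hq fun t _ => hpos t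
  rwa [h_norm, h_pairing, mul_zero, add_zero] at h_expand

theorem weightedLpNorm_const_add_smul_sq_le {m δ : ℝ} (hm : 0 < m) (hw : ∀ i, m ≤ w i)
    (hw_sum : ∑ i, w i = 1) (hq : 2 ≤ q) (hδ : |δ| ≤ m ^ (1 / 2 - 1 / q) / √(q - 1)) (a : ℝ)
    {z : ι → ℝ} (hz : ∑ i, w i * z i = 0) :
    weightedLpNorm w q (const ι a + δ • z) ^ 2 ≤ a ^ 2 + weightedLpNorm w 2 z ^ 2 := by
  have hw_nonneg : 0 ≤ w := fun i => hm.le.trans (hw i)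
  have hq1 : 0 < q - 1 := by linarith
  have hδz : ∑ i, w i * (δ • z) i = 0 := by
    simp only [Pi.smul_apply, smul_eq_mul, mul_left_comm _ δ, ← Finset.mul_sum, hz, mul_zero]
  have hδ_sqrt : √(q - 1) * |δ| ≤ m ^ (1 / 2 - 1 / q) := by
    rw [mul_comm]
    exact (le_div_iff₀ (sqrt_pos.2 hq1)).1 hδ
  have h_contract : √(q - 1) * weightedLpNorm w q (δ • z) ≤ weightedLpNorm w 2 z := calc
    _ = √(q - 1) * |δ| * weightedLpNorm w q z := by
      rw [weightedLpNorm_smul hw_nonneg (by linarith), mul_assoc]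
    _ ≤ m ^ (1 / 2 - 1 / q) * (m ^ (1 / q - 1 / 2) * weightedLpNorm w 2 z) :=
      mul_le_mul hδ_sqrt (weightedLpNorm_le_of_weight_ge hm hw two_pos hq z)
        (weightedLpNorm_nonneg hw_nonneg q z) (by positivity)
    _ = weightedLpNorm w 2 z := by
      rw [← mul_assoc, ← rpow_add hm, sub_add_sub_cancel, sub_self, rpow_zero, one_mul]
  calc weightedLpNorm w q (const ι a + δ • z) ^ 2
      ≤ a ^ 2 + (q - 1) * weightedLpNorm w q (δ • z) ^ 2 :=
        weightedLpNorm_const_add_sq_le hw_nonneg hw_sum hq a hδz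
    _ = a ^ 2 + (√(q - 1) * weightedLpNorm w q (δ • z)) ^ 2 := by rw [mul_pow, sq_sqrt hq1.le]
    _ ≤ a ^ 2 + weightedLpNorm w 2 z ^ 2 := by
      have := weightedLpNorm_nonneg hw_nonneg q (δ • z)
      gcongr

end UniformSmoothness

section BiasedBit

variable {p : ℝ}

/-- The mass of a bit under the `p`-biased measure on `Bool`: one factor of `pwt`. -/
noncomputable def bitWeight (p : ℝ) (c : Bool) : ℝ :=
  if c then p else 1 - p

/-- The `p`-biased character of a single bit: one factor of `chi`. -/
noncomputable def bitChar (p : ℝ) (c : Bool) : ℝ :=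
  ((if c then (1 : ℝ) else -1) - (2 * p - 1)) / (2 * √(p * (1 - p)))

lemma bitWeight_nonneg (hp : p ∈ Set.Icc (0 : ℝ) 1) : 0 ≤ bitWeight p
  | true => hp.1
  | false => sub_nonneg.2 hp.2

lemma min_le_bitWeight (p : ℝ) : ∀ c, min p (1 - p) ≤ bitWeight p c
  | true => min_le_left _ _
  | false => min_le_right _ _

lemma sum_bitWeight (p : ℝ) : ∑ c, bitWeight p c = 1 := by
  simp [bitWeight]

lemma bitChar_true (p : ℝ) : bitChar p true = (1 - p) / √(p * (1 - p)) := by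
  rw [bitChar, if_pos rfl, ← mul_div_mul_left _ _ (two_ne_zero' ℝ)]
  ring

lemma bitChar_false (p : ℝ) : bitChar p false = -p / √(p * (1 - p)) := by
  rw [bitChar, if_neg Bool.false_ne_true, ← mul_div_mul_left _ _ (two_ne_zero' ℝ)]
  ring

lemma sum_bitWeight_mul_bitChar_mul (p : ℝ) (g : Bool → ℝ) :
    ∑ c, bitWeight p c * bitChar p c * g c = √(p * (1 - p)) * (g true - g false) := by
  rw [← div_sqrt (x := p * (1 - p)), Fintype.sum_bool, bitChar_true, bitChar_false]
  simp only [bitWeight, if_true, Bool.false_eq_true, if_false]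
  ring

lemma sum_bitWeight_mul_bitChar (p : ℝ) : ∑ c, bitWeight p c * bitChar p c = 0 := by
  simpa using sum_bitWeight_mul_bitChar_mul p 1

lemma sum_bitWeight_mul_bitChar_sq (hp : p ∈ Set.Ioo (0 : ℝ) 1) :
    ∑ c, bitWeight p c * bitChar p c ^ 2 = 1 := by
  have h_sqrt : √(p * (1 - p)) ≠ 0 := (sqrt_pos.2 (mul_pos hp.1 (sub_pos.2 hp.2))).ne'
  simp only [sq, ← mul_assoc]
  rw [sum_bitWeight_mul_bitChar_mul, bitChar_true, bitChar_false]
  field_simp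
  ring

lemma sum_bitWeight_mul_sq (hp : p ∈ Set.Icc (0 : ℝ) 1) (g : Bool → ℝ) :
    ∑ c, bitWeight p c * g c ^ 2 =
      (∑ c, bitWeight p c * g c) ^ 2 + (∑ c, bitWeight p c * bitChar p c * g c) ^ 2 := by
  rw [sum_bitWeight_mul_bitChar_mul, mul_pow, sq_sqrt (mul_nonneg hp.1 (sub_nonneg.2 hp.2))]
  simp only [Fintype.sum_bool, bitWeight, if_true, Bool.false_eq_true, if_false]
  ring

theorem weightedLpNorm_bitWeight_le {q δ : ℝ} (hp : p ∈ Set.Ioo (0 : ℝ) 1) (hq : 2 ≤ q)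
    (hδ : |δ| ≤ min p (1 - p) ^ (1 / 2 - 1 / q) / √(q - 1)) (a b : ℝ) :
    weightedLpNorm (bitWeight p) q (fun c => a + δ * bitChar p c * b) ≤ √(a ^ 2 + b ^ 2) := by
  have hw := bitWeight_nonneg (Set.Ioo_subset_Icc_self hp)
  have h_fun : (fun c => a + δ * bitChar p c * b) = const Bool a + δ • b • bitChar p := by
    ext c
    simp only [Pi.add_apply, const_apply, Pi.smul_apply, smul_eq_mul]
    ring
  have h_mean : ∑ c, bitWeight p c * (b • bitChar p) c = 0 := by
    simp only [Pi.smul_apply, smul_eq_mul, mul_left_comm _ b, ← Finset.mul_sum,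
      sum_bitWeight_mul_bitChar, mul_zero]
  have h_norm : weightedLpNorm (bitWeight p) 2 (b • bitChar p) ^ 2 = b ^ 2 := by
    rw [weightedLpNorm_smul hw two_ne_zero, mul_pow, sq_abs, weightedLpNorm_two_sq hw,
      sum_bitWeight_mul_bitChar_sq hp, mul_one]
  rw [h_fun, ← h_norm]
  exact le_sqrt_of_sq_le <| weightedLpNorm_const_add_smul_sq_le
    (lt_min hp.1 (sub_pos.2 hp.2)) (min_le_bitWeight p) (sum_bitWeight p) hq hδ a h_mean

end BiasedBit

section Tensorization

variable {p q δ : ℝ} {n : ℕ}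

/-- The average of `f` over its first bit. -/
noncomputable def headMean (p : ℝ) (f : (Fin (n + 1) → Bool) → ℝ) (y : Fin n → Bool) : ℝ :=
  ∑ c, bitWeight p c * f (Fin.cons c y)

/-- The coefficient of the character of the first bit in `f`, as a function of the other bits, so
that `f (c, y) = headMean p f y + bitChar p c * headCoeff p f y`. -/
noncomputable def headCoeff (p : ℝ) (f : (Fin (n + 1) → Bool) → ℝ) (y : Fin n → Bool) : ℝ :=
  ∑ c, bitWeight p c * bitChar p c * f (Fin.cons c y)

lemma pwt_nonneg (hp : p ∈ Set.Icc (0 : ℝ) 1) : 0 ≤ pwt p (n := n) :=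
  fun x => Finset.prod_nonneg fun i _ => bitWeight_nonneg hp (x i)

lemma pE_cons (p : ℝ) (f : (Fin (n + 1) → Bool) → ℝ) :
    pE p f = pE p fun y => ∑ c, bitWeight p c * f (Fin.cons c y) := by
  simp only [pE, Finset.mul_sum]
  rw [← (Fin.consEquiv fun _ => Bool).sum_comp, Fintype.sum_prod_type_right]
  refine Finset.sum_congr rfl fun y _ => Finset.sum_congr rfl fun c _ => ?_
  change pwt p (Fin.cons c y) * f (Fin.cons c y) = _
  simp only [pwt, bitWeight, Fin.prod_univ_succ, Fin.cons_zero, Fin.cons_succ]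
  ring

lemma pNorm_eq_weightedLpNorm (p q : ℝ) (f : (Fin n → Bool) → ℝ) :
    pNorm p q f = weightedLpNorm (pwt p) q f :=
  rfl

lemma pNorm_cons (hp : p ∈ Set.Icc (0 : ℝ) 1) (hq : q ≠ 0) (f : (Fin (n + 1) → Bool) → ℝ) :
    pNorm p q f =
      pNorm p q fun y => weightedLpNorm (bitWeight p) q fun c => f (Fin.cons c y) := by
  have hw := bitWeight_nonneg hp
  simp only [pNorm, pE_cons p fun x => |f x| ^ q, abs_of_nonneg (weightedLpNorm_nonneg hw q _),
    weightedLpNorm_rpow_self hw hq]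

lemma pE_fin_zero (p : ℝ) (f : (Fin 0 → Bool) → ℝ) (x : Fin 0 → Bool) : pE p f = f x := by
  rw [pE, Fintype.sum_subsingleton _ x, pwt, Fin.prod_univ_zero, one_mul]

lemma pNorm_fin_zero (p : ℝ) (hq : q ≠ 0) (f : (Fin 0 → Bool) → ℝ) (x : Fin 0 → Bool) :
    pNorm p q f = |f x| := by
  rw [pNorm, pE_fin_zero p _ x, ← rpow_mul (abs_nonneg _), mul_one_div_cancel hq, rpow_one]

lemma pNorm_two_sq_cons (hp : p ∈ Set.Icc (0 : ℝ) 1) (f : (Fin (n + 1) → Bool) → ℝ) :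
    pNorm p 2 f ^ 2 = pNorm p 2 (headMean p f) ^ 2 + pNorm p 2 (headCoeff p f) ^ 2 := by
  simp only [pNorm_cons hp two_ne_zero f, pNorm_eq_weightedLpNorm,
    weightedLpNorm_two_sq (pwt_nonneg hp), weightedLpNorm_two_sq (bitWeight_nonneg hp),
    sum_bitWeight_mul_sq hp, mul_add, Finset.sum_add_distrib, headMean, headCoeff]

lemma noiseOp_eq_pE_mul_kernel (p δ : ℝ) (f : (Fin n → Bool) → ℝ) (x : Fin n → Bool) :
    noiseOp p δ f x = pE p fun y => f y * ∏ i, (1 + δ * bitChar p (x i) * bitChar p (y i)) := by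
  simp only [noiseOp, fhat, pE, Finset.prod_one_add, Finset.powerset_univ, Finset.mul_sum,
    Finset.sum_mul]
  rw [Finset.sum_comm]
  refine Finset.sum_congr rfl fun y _ => Finset.sum_congr rfl fun S _ => ?_
  rw [Finset.prod_mul_distrib, Finset.prod_mul_distrib, Finset.prod_const]
  simp only [chi, bitChar]
  ring

lemma noiseOp_fin_zero (p δ : ℝ) (f : (Fin 0 → Bool) → ℝ) : noiseOp p δ f = f := by
  ext x
  rw [noiseOp_eq_pE_mul_kernel, pE_fin_zero p _ x, Fin.prod_univ_zero, mul_one]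

lemma noiseOp_cons (p δ : ℝ) (f : (Fin (n + 1) → Bool) → ℝ) (c : Bool) (y : Fin n → Bool) :
    noiseOp p δ f (Fin.cons c y) =
      noiseOp p δ (headMean p f) y + δ * bitChar p c * noiseOp p δ (headCoeff p f) y := by
  simp only [noiseOp_eq_pE_mul_kernel]
  rw [pE_cons]
  simp only [pE, Finset.mul_sum, ← Finset.sum_add_distrib]
  refine Finset.sum_congr rfl fun z _ => ?_
  simp only [Fin.prod_univ_succ, Fin.cons_zero, Fin.cons_succ, headMean, headCoeff,
    Fintype.sum_bool]
  ring

theorem pNorm_noiseOp_le_of_bit (hp : p ∈ Set.Icc (0 : ℝ) 1) (hq : 2 ≤ q)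
    (h_bit : ∀ a b : ℝ,
      weightedLpNorm (bitWeight p) q (fun c => a + δ * bitChar p c * b) ≤ √(a ^ 2 + b ^ 2))
    (f : (Fin n → Bool) → ℝ) : pNorm p q (noiseOp p δ f) ≤ pNorm p 2 f := by
  have hq0 : q ≠ 0 := by linarith
  have h_nonneg (r : ℝ) {k : ℕ} (g : (Fin k → Bool) → ℝ) : 0 ≤ pNorm p r g :=
    weightedLpNorm_nonneg (pwt_nonneg hp) r g
  induction n with
  | zero =>
    rw [noiseOp_fin_zero, pNorm_fin_zero p hq0 f default, pNorm_fin_zero p two_ne_zero f default]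
  | succ n ih =>
    set u := noiseOp p δ (headMean p f)
    set v := noiseOp p δ (headCoeff p f)
    have h_slice : pNorm p q (noiseOp p δ f) ≤ pNorm p q fun y => √(u y ^ 2 + v y ^ 2) := by
      rw [pNorm_cons hp hq0]
      simp only [noiseOp_cons]
      refine weightedLpNorm_mono (pwt_nonneg hp) (by linarith) fun y => ?_
      exact abs_le_abs_of_nonneg (weightedLpNorm_nonneg (bitWeight_nonneg hp) q _)
        (h_bit (u y) (v y))
    refine (sq_le_sq₀ (h_nonneg q _) (h_nonneg 2 f)).1 ?_
    calc pNorm p q (noiseOp p δ f) ^ 2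
        ≤ (pNorm p q fun y => √(u y ^ 2 + v y ^ 2)) ^ 2 :=
          pow_le_pow_left₀ (h_nonneg q _) h_slice 2
      _ ≤ pNorm p q u ^ 2 + pNorm p q v ^ 2 :=
          weightedLpNorm_sqrt_sq_add_sq_le (pwt_nonneg hp) hq u v
      _ ≤ pNorm p 2 (headMean p f) ^ 2 + pNorm p 2 (headCoeff p f) ^ 2 :=
          add_le_add (pow_le_pow_left₀ (h_nonneg q u) (ih _) 2)
            (pow_le_pow_left₀ (h_nonneg q v) (ih _) 2)
      _ = pNorm p 2 f ^ 2 := (pNorm_two_sq_cons hp f).symm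

end Tensorization

theorem stmt1_general (p : ℝ) (hp : p ∈ Set.Ioo (0 : ℝ) 1) (q : ℝ) (hq : 2 ≤ q)
    (γ : ℝ) (hγ : |γ| ≤ min p (1 - p) ^ ((1 : ℝ) / 2 - 1 / q) / √(q - 1))
    (n : ℕ) (f : (Fin n → Bool) → ℝ) :
    pNorm p q (noiseOp p γ f) ≤ pNorm p 2 f :=
  pNorm_noiseOp_le_of_bit (Set.Ioo_subset_Icc_self hp) hq (weightedLpNorm_bitWeight_le hp hq hγ) f

/-- Hypercontractivity for the p-biased measure, smoothing parameter (i):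
ρ(q) = λ^(1/2 - 1/q), γ = ρ(q)/√(q-1). -/
theorem stmt1 (p : ℝ) (hp : p ∈ Set.Ioo (0:ℝ) 1) (q : ℝ) (hq : 2 ≤ q)
    (γ : ℝ) (hγ : γ = (min p (1 - p)) ^ ((1:ℝ)/2 - 1/q) / Real.sqrt (q - 1))
    (n : ℕ) (f : (Fin n → Bool) → ℝ) :
    pNorm p q (noiseOp p γ f) ≤ pNorm p 2 f :=
  stmt1_general p hp q hq γ (by
    rw [hγ, abs_of_nonneg]
    have := le_min hp.1.le (sub_nonneg.2 hp.2.le)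
    positivity) n f
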